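/- arXiv:2509.24687 — 3 statements merged into one kernel-verified Lean document; each statement's English description precedes it below -/
import Mathlib

section
/- For every α > 0, one has the identity ∑_{γ ∈ Γ₂} exp(−πα‖γ − 2√2·z₀‖²) = 2·∑_{(k,l) ∈ ℤ²} exp(−(4πα/√3)·((k−1/3)² + (k−1/3)(l−1/3) + (l−1/3)²)). -/
open Real MeasureTheory
open scoped RealInnerProductSpace ENNReal

/-- The vector `(x, y)` in the Euclidean plane `ℝ²`. -/
noncomputable def vec2 (x y : ℝ) : EuclideanSpace ℝ (Fin 2) :=
  (WithLp.equiv 2 (Fin 2 → ℝ)).symm ![x, y]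

/-- The hexagonal lattice `Λ₂` of density 1:
`Λ₂ = {√(2/√3)·(k + l/2, l·√3/2) : (k,l) ∈ ℤ²}`. -/
noncomputable def hexLattice : Set (EuclideanSpace ℝ (Fin 2)) :=
  {p | ∃ k l : ℤ,
    p = Real.sqrt (2 / Real.sqrt 3) • vec2 ((k : ℝ) + (l : ℝ) / 2) ((l : ℝ) * (Real.sqrt 3 / 2))}

/-- The deep hole `z₀ = √(2/√3)·(1/2, 1/(2√3))` of the hexagonal lattice. -/
noncomputable def deepHole : EuclideanSpace ℝ (Fin 2) :=
  Real.sqrt (2 / Real.sqrt 3) • vec2 (1 / 2) (1 / (2 * Real.sqrt 3))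

/-- The honeycomb structure `Γ₂ = √2·(Λ₂ ∪ (Λ₂ + z₀))` of density 1. -/
noncomputable def honeycomb : Set (EuclideanSpace ℝ (Fin 2)) :=
  (fun p => Real.sqrt 2 • p) '' (hexLattice ∪ (fun p => p + deepHole) '' hexLattice)

/-!
Measured from the deep hole `2z₀` of `Λ₂ ∪ (Λ₂ + z₀)`, the two pieces are `Λ₂ - 2z₀` and `Λ₂ - z₀`.
Since `3z₀ ∈ Λ₂`, the first is `Λ₂ + z₀ = -(Λ₂ - z₀)`, so both pieces contribute equally to the sum
of any radial function. In lattice coordinates `z₀ = (1/3, 1/3)`.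
-/

/-- The quadratic form `x² + xy + y²`, to which the squared Euclidean norm is proportional in
lattice coordinates of `hexLattice`. -/
def hexForm (x y : ℝ) : ℝ := x ^ 2 + x * y + y ^ 2

lemma hexForm_neg_neg (x y : ℝ) : hexForm (-x) (-y) = hexForm x y := by
  simp only [hexForm]
  ring

lemma half_mul_sq_add_sq_le_hexForm (x y : ℝ) : 1 / 2 * (x ^ 2 + y ^ 2) ≤ hexForm x y := by
  rw [hexForm]
  linarith [sq_nonneg (x + y)]

lemma eq_zero_of_hexForm_eq_zero {x y : ℝ} (h : hexForm x y = 0) : x = 0 ∧ y = 0 := by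
  have hle := half_mul_sq_add_sq_le_hexForm x y
  constructor <;> nlinarith [sq_nonneg x, sq_nonneg y]

lemma summable_exp_neg_mul_int_sub_sq {c : ℝ} (hc : 0 < c) (a : ℝ) :
    Summable fun n : ℤ => rexp (-c * (n - a) ^ 2) := by
  refine (HurwitzZeta.hasSum_int_evenKernel (-a) (div_pos hc pi_pos)).summable.congr fun n => ?_
  congr 1
  field_simp
  ring

lemma summable_exp_neg_mul_hexForm {c : ℝ} (hc : 0 < c) (a b : ℝ) :
    Summable fun p : ℤ × ℤ => rexp (-c * hexForm (p.1 - a) (p.2 - b)) := by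
  have hprod : Summable fun p : ℤ × ℤ =>
      rexp (-(c / 2) * (p.1 - a) ^ 2) * rexp (-(c / 2) * (p.2 - b) ^ 2) :=
    (summable_exp_neg_mul_int_sub_sq (half_pos hc) a).mul_of_nonneg
      (summable_exp_neg_mul_int_sub_sq (half_pos hc) b)
      (fun _ => (exp_pos _).le) (fun _ => (exp_pos _).le)
  refine hprod.of_nonneg_of_le (fun _ => (exp_pos _).le) fun p => ?_
  rw [← exp_add, exp_le_exp]
  have hle := mul_le_mul_of_nonneg_left
    (half_mul_sq_add_sq_le_hexForm (p.1 - a) (p.2 - b)) hc.le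
  linarith

/-- The linear parametrisation of the plane by lattice coordinates: `hexLattice` consists of the
points with integer coordinates. -/
noncomputable def hexPoint : ℝ × ℝ →ₗ[ℝ] EuclideanSpace ℝ (Fin 2) where
  toFun p := √(2 / √3) • vec2 (p.1 + p.2 / 2) (p.2 * (√3 / 2))
  map_add' p q := by
    ext i
    fin_cases i <;> simp [vec2] <;> ring
  map_smul' t p := by
    ext i
    fin_cases i <;> simp [vec2] <;> ring

lemma norm_vec2_sq (x y : ℝ) : ‖vec2 x y‖ ^ 2 = x ^ 2 + y ^ 2 := by
  simp [vec2, EuclideanSpace.norm_sq_eq]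

lemma norm_hexPoint_sq (x y : ℝ) : ‖hexPoint (x, y)‖ ^ 2 = 2 / √3 * hexForm x y := by
  have hscale : √(2 / √3) ^ 2 = 2 / √3 := sq_sqrt (by positivity)
  have hsqrt : √3 ^ 2 = 3 := sq_sqrt (by norm_num)
  calc ‖hexPoint (x, y)‖ ^ 2
      = 2 / √3 * ((x + y / 2) ^ 2 + y ^ 2 * (√3 ^ 2 / 4)) := by
        simp only [hexPoint, LinearMap.coe_mk, AddHom.coe_mk, norm_smul, mul_pow, norm_eq_abs,
          sq_abs, hscale, norm_vec2_sq]
        ring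
    _ = 2 / √3 * hexForm x y := by
        rw [hsqrt, hexForm]
        ring

lemma hexPoint_injective : Function.Injective hexPoint := by
  refine (injective_iff_map_eq_zero hexPoint).2 fun ⟨x, y⟩ h => ?_
  have hnorm := norm_hexPoint_sq x y
  rw [h, norm_zero, zero_pow two_ne_zero, eq_comm, mul_eq_zero_iff_left (by positivity)] at hnorm
  exact Prod.ext_iff.2 (eq_zero_of_hexForm_eq_zero hnorm)

lemma sqrt_two_smul_hexPoint_injective : Function.Injective fun p => √2 • hexPoint p :=
  (smul_right_injective _ (by positivity : √2 ≠ 0)).comp hexPoint_injective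

lemma deepHole_eq_hexPoint : deepHole = hexPoint (1 / 3, 1 / 3) := by
  have hsqrt : √3 ^ 2 = 3 := sq_sqrt (by norm_num)
  change √(2 / √3) • vec2 _ _ = √(2 / √3) • vec2 _ _
  congr 2
  · norm_num
  · field_simp
    linarith

lemma norm_sqrt_two_smul_hexPoint_sub_sq (x y : ℝ) :
    ‖√2 • hexPoint (x, y) - (2 * √2) • deepHole‖ ^ 2 =
      4 / √3 * hexForm (x - 2 / 3) (y - 2 / 3) := by
  have hdiff : √2 • hexPoint (x, y) - (2 * √2) • deepHole =
      √2 • hexPoint (x - 2 / 3, y - 2 / 3) := by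
    rw [deepHole_eq_hexPoint, mul_comm, mul_smul, ← smul_sub, ← map_smul hexPoint, ← map_sub]
    norm_num
  rw [hdiff, norm_smul, mul_pow, norm_hexPoint_sq, norm_eq_abs, sq_abs, sq_sqrt zero_le_two]
  ring

/-- The point of `√2 • hexLattice` with integer coordinates `1 - p`. Reflecting the coordinates
makes its position relative to the deep hole `2√2·z₀` opposite to that of `shiftedPoint p`. -/
noncomputable def latticePoint (p : ℤ × ℤ) : EuclideanSpace ℝ (Fin 2) :=
  √2 • hexPoint (1 - p.1, 1 - p.2)

/-- The point of `√2 • (hexLattice + deepHole)` indexed by `p`. -/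
noncomputable def shiftedPoint (p : ℤ × ℤ) : EuclideanSpace ℝ (Fin 2) :=
  √2 • hexPoint (p.1 + 1 / 3, p.2 + 1 / 3)

lemma latticePoint_injective : Function.Injective latticePoint := fun p q h => by
  simpa [Prod.ext_iff] using sqrt_two_smul_hexPoint_injective h

lemma shiftedPoint_injective : Function.Injective shiftedPoint := fun p q h => by
  simpa [Prod.ext_iff] using sqrt_two_smul_hexPoint_injective h

lemma disjoint_range_latticePoint_range_shiftedPoint :
    Disjoint (Set.range latticePoint) (Set.range shiftedPoint) := by
  refine Set.disjoint_range_iff.2 fun p q h => ?_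
  have hfst : (1 - p.1 : ℝ) = q.1 + 1 / 3 :=
    congrArg Prod.fst (sqrt_two_smul_hexPoint_injective h)
  have hint : 3 * (1 - p.1) = 3 * q.1 + 1 := by
    have hreal : (3 * (1 - p.1) : ℝ) = 3 * q.1 + 1 := by linarith
    exact_mod_cast hreal
  omega

lemma hexLattice_eq_range : hexLattice = Set.range fun p : ℤ × ℤ => hexPoint (p.1, p.2) := by
  ext x
  simp only [hexLattice, Set.mem_ofPred_eq, Set.mem_range, Prod.exists, eq_comm (a := x)]
  rfl

lemma range_latticePoint : Set.range latticePoint = (√2 • ·) '' hexLattice := by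
  rw [hexLattice_eq_range, ← Set.range_comp,
    ← (Equiv.subLeft (1 : ℤ × ℤ)).surjective.range_comp]
  congr 1
  ext1 p
  simp [latticePoint]

lemma range_shiftedPoint :
    Set.range shiftedPoint = (√2 • ·) '' ((· + deepHole) '' hexLattice) := by
  rw [hexLattice_eq_range, ← Set.range_comp, ← Set.range_comp]
  congr 1
  ext1 p
  simp [shiftedPoint, deepHole_eq_hexPoint, ← map_add]

lemma honeycomb_eq_union_range :
    honeycomb = Set.range latticePoint ∪ Set.range shiftedPoint := by
  rw [range_latticePoint, range_shiftedPoint, ← Set.image_union, honeycomb]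

lemma norm_latticePoint_sub_sq (p : ℤ × ℤ) :
    ‖latticePoint p - (2 * √2) • deepHole‖ ^ 2 =
      4 / √3 * hexForm (p.1 - 1 / 3) (p.2 - 1 / 3) := by
  rw [latticePoint, norm_sqrt_two_smul_hexPoint_sub_sq, ← hexForm_neg_neg]
  ring_nf

lemma norm_shiftedPoint_sub_sq (p : ℤ × ℤ) :
    ‖shiftedPoint p - (2 * √2) • deepHole‖ ^ 2 =
      4 / √3 * hexForm (p.1 - 1 / 3) (p.2 - 1 / 3) := by
  rw [shiftedPoint, norm_sqrt_two_smul_hexPoint_sub_sq]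
  ring_nf

theorem honeycomb_deepHole_sum_eq_general {M : Type*} [AddCommMonoid M] [TopologicalSpace M]
    [ContinuousAdd M] (f : ℝ → M) {S : M}
    (hS : HasSum (fun p : ℤ × ℤ => f (4 / √3 * hexForm (p.1 - 1 / 3) (p.2 - 1 / 3))) S) :
    HasSum (fun g : honeycomb =>
      f (‖(g : EuclideanSpace ℝ (Fin 2)) - (2 * √2) • deepHole‖ ^ 2)) (2 • S) := by
  let F (x : EuclideanSpace ℝ (Fin 2)) : M := f (‖x - (2 * √2) • deepHole‖ ^ 2)
  have hlattice : HasSum (fun x : Set.range latticePoint => F x) S := by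
    rw [latticePoint_injective.hasSum_range_iff]
    simpa only [F, Function.comp_def, norm_latticePoint_sub_sq] using hS
  have hshifted : HasSum (fun x : Set.range shiftedPoint => F x) S := by
    rw [shiftedPoint_injective.hasSum_range_iff]
    simpa only [F, Function.comp_def, norm_shiftedPoint_sub_sq] using hS
  rw [honeycomb_eq_union_range, two_nsmul]
  exact HasSum.add_disjoint (f := F) disjoint_range_latticePoint_range_shiftedPoint
    hlattice hshifted

/-- The Gaussian sum of the honeycomb structure `Γ₂` at its deep hole `2√2·z₀`,
rewritten over the integer lattice `ℤ²` by a linear change of coordinates. -/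
theorem honeycomb_deepHole_sum_eq (α : ℝ) (hα : 0 < α) :
    (∑' g : honeycomb,
        Real.exp (-(Real.pi * α) *
          ‖(g : EuclideanSpace ℝ (Fin 2)) - (2 * Real.sqrt 2) • deepHole‖ ^ 2)) =
      2 * ∑' p : ℤ × ℤ,
        Real.exp (-(4 * Real.pi * α / Real.sqrt 3) *
          (((p.1 : ℝ) - 1 / 3) ^ 2 + ((p.1 : ℝ) - 1 / 3) * ((p.2 : ℝ) - 1 / 3) +
            ((p.2 : ℝ) - 1 / 3) ^ 2)) := by
  have exponent_eq (q : ℝ) : -(π * α) * (4 / √3 * q) = -(4 * π * α / √3) * q := by ring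
  have hgauss := (summable_exp_neg_mul_hexForm
    (c := 4 * π * α / √3) (by positivity) (1 / 3) (1 / 3)).hasSum
  simp only [← exponent_eq] at hgauss
  have hsum := honeycomb_deepHole_sum_eq_general (fun t => rexp (-(π * α) * t)) hgauss
  simpa only [exponent_eq, hexForm, nsmul_eq_mul, Nat.cast_ofNat] using hsum.tsum_eq
end

section
/- For every α > 0, the following theta transformation identity holds: α · ∑_{(k,l) ∈ ℤ²} exp(−(2πα/√3)·((k−1/3)² + (k−1/3)(l−1/3) + (l−1/3)²)) = ∑_{(k,l) ∈ ℤ²} exp(−(2π/(√3·α))·(k² + k·l + l²)) · cos(2π(k−l)/3). -/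
/-!
Completing the square in `y` splits a positive definite form `Q(x, y) = a x² + b x y + c y²` as
`c (y + b x / (2c))² + (4ac - b²) / (4c) x²`. One-dimensional Poisson summation in `y` therefore
turns the Gaussian sum of `Q` over a shifted lattice into a sum of products of Gaussians in `x`
and characters, and a second Poisson summation, in `x`, yields the Gaussian sum of the inverse
form, twisted by the character of the shift. For `a = b = c = 2α/√3` the inverse form is
`2 / (√3 α) (k² - k l + l²)`; the quarter turn relating the hexagonal lattice to its dual becomes
the substitution `k ↦ -k`.
-/

open Real

open scoped FourierTransform

theorem tsum_cexp_shifted_gaussian {a : ℂ} (ha : 0 < a.re) (s u : ℂ) :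
    ∑' n : ℤ, Complex.exp (-π * a * (n + s) ^ 2 + 2 * π * Complex.I * (u * (n + s))) =
      1 / a ^ (1 / 2 : ℂ) *
        ∑' n : ℤ, Complex.exp (-π / a * (n - u) ^ 2 + 2 * π * Complex.I * (n * s)) := by
  have ha0 : a ≠ 0 := by rintro rfl; simp at ha
  have poisson := Complex.tsum_exp_neg_quadratic ha (-a * s + Complex.I * u)
  calc
    _ = Complex.exp (-π * a * s ^ 2 + 2 * π * Complex.I * (u * s)) *
        ∑' n : ℤ, Complex.exp (-π * a * n ^ 2 + 2 * π * (-a * s + Complex.I * u) * n) := by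
      rw [← tsum_mul_left]
      refine tsum_congr fun n ↦ ?_
      rw [← Complex.exp_add]
      ring_nf
    _ = _ := by
      rw [poisson, mul_left_comm, ← tsum_mul_left]
      congr 1
      refine tsum_congr fun n ↦ ?_
      have center : n + Complex.I * (-a * s + Complex.I * u) = n - u - Complex.I * (a * s) := by
        linear_combination u * Complex.I_sq
      rw [center, ← Complex.exp_add]
      congr 1
      field_simp
      linear_combination -(a * s) ^ 2 * Complex.I_sq

theorem tsum_shifted_gaussian_mul_fourierChar {a : ℝ} (ha : 0 < a) (s u : ℝ) :
    ∑' n : ℤ, (exp (-π * (a * (n + s) ^ 2)) : ℂ) * 𝐞 (u * (n + s)) =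
      1 / (√a : ℂ) * ∑' n : ℤ, (exp (-π * ((n - u) ^ 2 / a)) : ℂ) * 𝐞 (n * s) := by
  have sqrt_a : (a : ℂ) ^ (1 / 2 : ℂ) = (√a : ℝ) := by
    rw [sqrt_eq_rpow, Complex.ofReal_cpow ha.le]
    norm_num
  convert! tsum_cexp_shifted_gaussian (a := a) (by simpa using ha) s u using 3 with n
  · rw [fourierChar_apply, Complex.ofReal_exp, ← Complex.exp_add]
    push_cast
    ring_nf
  · rw [sqrt_a]
  · ext n
    rw [fourierChar_apply, Complex.ofReal_exp, ← Complex.exp_add]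
    push_cast
    ring_nf

theorem summable_gaussian_prod {c d : ℝ} (hc : 0 < c) (hd : 0 < d) (s t : ℝ) :
    Summable fun p : ℤ × ℤ ↦ exp (-π * (c * (p.1 + s) ^ 2 + d * (p.2 + t) ^ 2)) := by
  refine ((HurwitzZeta.hasSum_int_evenKernel s hc).summable.mul_of_nonneg
    (HurwitzZeta.hasSum_int_evenKernel t hd).summable
    (fun _ ↦ (exp_pos _).le) fun _ ↦ (exp_pos _).le).congr fun p ↦ ?_
  rw [← exp_add]
  ring_nf

theorem summable_ofReal_mul_circle {ι : Type*} {f : ι → ℝ} (hf : Summable f) (z : ι → Circle) :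
    Summable fun i ↦ (f i : ℂ) * z i := by
  refine Summable.of_norm (hf.norm.congr fun i ↦ ?_)
  rw [norm_mul, Circle.norm_coe, mul_one, Complex.norm_real]

/-- The binary quadratic form `a x² + b x y + c y²`: when positive definite, the squared length of
a vector in terms of its coordinates with respect to a basis of a planar lattice. -/
def binaryForm (a b c x y : ℝ) : ℝ :=
  a * x ^ 2 + b * x * y + c * y ^ 2

namespace binaryForm

variable {a b c : ℝ}

theorem eq_complete_square (hc : c ≠ 0) (x y : ℝ) :
    binaryForm a b c x y =
      (4 * a * c - b ^ 2) / (4 * c) * x ^ 2 + c * (y + b * x / (2 * c)) ^ 2 := by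
  rw [binaryForm]
  field_simp
  ring

theorem right_pos (ha : 0 < a) (h : b ^ 2 < 4 * a * c) : 0 < c := by
  nlinarith [sq_nonneg b]

theorem mul_sq_add_sq_le (a b c x y : ℝ) :
    (4 * a * c - b ^ 2) * (x ^ 2 + y ^ 2) ≤ 4 * (a + c) * binaryForm a b c x y := by
  rw [binaryForm]
  nlinarith [sq_nonneg (2 * a * x + b * y), sq_nonneg (2 * c * y + b * x)]

theorem const_mul (r a b c x y : ℝ) :
    r * binaryForm a b c x y = binaryForm (r * a) (r * b) (r * c) x y := by
  simp only [binaryForm]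
  ring

theorem summable_exp (ha : 0 < a) (h : b ^ 2 < 4 * a * c) (s t : ℝ) :
    Summable fun p : ℤ × ℤ ↦ exp (-π * binaryForm a b c (p.1 + s) (p.2 + t)) := by
  have hc := right_pos ha h
  have hδ : 0 < (4 * a * c - b ^ 2) / (4 * (a + c)) := div_pos (by linarith) (by linarith)
  refine .of_nonneg_of_le (fun _ ↦ (exp_pos _).le) (fun p ↦ exp_le_exp.2 ?_)
    (summable_gaussian_prod hδ hδ s t)
  rw [neg_mul, neg_mul, neg_le_neg_iff, ← mul_add, div_mul_eq_mul_div]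
  gcongr
  rw [div_le_iff₀' (by linarith)]
  exact mul_sq_add_sq_le ..

/-- The summand obtained from `exp (-π Q(m + s, n + t))`, where `Q = binaryForm a b c`, by Poisson
summation in `n`, which here denotes the dual variable. The factor `1 / √c` is left out. -/
noncomputable def partialFourier (a b c s t : ℝ) (m n : ℤ) : ℂ :=
  exp (-π * ((4 * a * c - b ^ 2) / (4 * c) * (m + s) ^ 2 + n ^ 2 / c)) *
    𝐞 (n * (t + b * (m + s) / (2 * c)))

/-- The summand on the dual side of Poisson summation for `exp (-π Q(m + s, n + t))`, where
`Q = binaryForm a b c`: the matrix of `Q` has inverse `4 / (4ac - b²)` times that of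
`binaryForm c (-b) a`. The covolume factor `2 / √(4ac - b²)` is left out. -/
noncomputable def dualTerm (a b c s t : ℝ) (m n : ℤ) : ℂ :=
  exp (-π * (4 / (4 * a * c - b ^ 2) * binaryForm c (-b) a m n)) * 𝐞 (m * s + n * t)

theorem summable_partialFourier (hc : 0 < c) (h : b ^ 2 < 4 * a * c) (s t : ℝ) :
    Summable fun p : ℤ × ℤ ↦ partialFourier a b c s t p.1 p.2 := by
  have hA : 0 < (4 * a * c - b ^ 2) / (4 * c) := div_pos (by linarith) (by linarith)
  have gaussian := summable_gaussian_prod hA (inv_pos.2 hc) s 0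
  refine summable_ofReal_mul_circle (gaussian.congr fun p ↦ ?_) _
  rw [add_zero, div_eq_inv_mul _ c]

theorem summable_dualTerm (ha : 0 < a) (h : b ^ 2 < 4 * a * c) (s t : ℝ) :
    Summable fun p : ℤ × ℤ ↦ dualTerm a b c s t p.1 p.2 := by
  have hc := right_pos ha h
  set r : ℝ := 4 / (4 * a * c - b ^ 2) with hr
  have r_pos : 0 < r := div_pos four_pos (by linarith)
  have posDef : (r * -b) ^ 2 < 4 * (r * c) * (r * a) := by
    nlinarith [mul_lt_mul_of_pos_left h (pow_pos r_pos 2)]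
  have gaussian := summable_exp (mul_pos r_pos hc) posDef 0 0
  refine summable_ofReal_mul_circle (gaussian.congr fun p ↦ ?_) _
  rw [add_zero, add_zero, ← const_mul, hr]

theorem tsum_exp_snd (hc : 0 < c) (a b s t : ℝ) (m : ℤ) :
    ∑' n : ℤ, (exp (-π * binaryForm a b c (m + s) (n + t)) : ℂ) =
      1 / (√c : ℂ) * ∑' n : ℤ, partialFourier a b c s t m n := by
  have poisson := tsum_shifted_gaussian_mul_fourierChar hc (t + b * (m + s) / (2 * c)) 0
  simp only [zero_mul, AddChar.map_zero_eq_one, Circle.coe_one, mul_one, sub_zero] at poisson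
  calc
    _ = (exp (-π * ((4 * a * c - b ^ 2) / (4 * c) * (m + s) ^ 2)) : ℂ) *
        ∑' n : ℤ, (exp (-π * (c * (n + (t + b * (m + s) / (2 * c))) ^ 2)) : ℂ) := by
      rw [← tsum_mul_left]
      refine tsum_congr fun n ↦ ?_
      rw [eq_complete_square hc.ne', mul_add, exp_add, Complex.ofReal_mul, add_assoc]
    _ = _ := by
      rw [poisson, mul_left_comm, ← tsum_mul_left]
      simp only [partialFourier, mul_add (-π), exp_add, Complex.ofReal_mul, mul_assoc]

theorem tsum_partialFourier_fst (hc : 0 < c) (h : b ^ 2 < 4 * a * c) (s t : ℝ) (n : ℤ) :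
    ∑' m : ℤ, partialFourier a b c s t m n =
      1 / (√((4 * a * c - b ^ 2) / (4 * c)) : ℂ) * ∑' m : ℤ, dualTerm a b c s t m n := by
  have hD : 0 < 4 * a * c - b ^ 2 := by linarith
  have dual_form (m : ℤ) : 4 / (4 * a * c - b ^ 2) * binaryForm c (-b) a m n =
      n ^ 2 / c + (m - b * n / (2 * c)) ^ 2 / ((4 * a * c - b ^ 2) / (4 * c)) := by
    rw [binaryForm]
    field_simp
    ring
  calc
    _ = (exp (-π * (n ^ 2 / c)) : ℂ) * 𝐞 (n * t) * ∑' m : ℤ,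
        (exp (-π * ((4 * a * c - b ^ 2) / (4 * c) * (m + s) ^ 2)) : ℂ) *
          𝐞 (b * n / (2 * c) * (m + s)) := by
      rw [← tsum_mul_left]
      refine tsum_congr fun m ↦ ?_
      have phase : n * (t + b * (m + s) / (2 * c)) = n * t + b * n / (2 * c) * (m + s) := by ring
      rw [partialFourier, phase, AddChar.map_add_eq_mul, mul_add (-π), exp_add]
      push_cast
      ring
    _ = _ := by
      rw [tsum_shifted_gaussian_mul_fourierChar (div_pos hD (by linarith)), mul_left_comm,
        ← tsum_mul_left]
      congr 1
      refine tsum_congr fun m ↦ ?_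
      rw [dualTerm, dual_form, AddChar.map_add_eq_mul, mul_add (-π), exp_add]
      push_cast
      ring

theorem tsum_exp_eq_tsum_dualTerm (ha : 0 < a) (h : b ^ 2 < 4 * a * c) (s t : ℝ) :
    ((∑' p : ℤ × ℤ, exp (-π * binaryForm a b c (p.1 + s) (p.2 + t)) : ℝ) : ℂ) =
      (2 / √(4 * a * c - b ^ 2) : ℝ) * ∑' p : ℤ × ℤ, dualTerm a b c s t p.1 p.2 := by
  have hc := right_pos ha h
  have sqrt_det : √c * √((4 * a * c - b ^ 2) / (4 * c)) = √(4 * a * c - b ^ 2) / 2 := by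
    have det : c * ((4 * a * c - b ^ 2) / (4 * c)) = (4 * a * c - b ^ 2) / 2 ^ 2 := by
      field_simp
      ring
    rw [← sqrt_mul hc.le, det, sqrt_div' _ (by positivity), sqrt_sq two_pos.le]
  have dual_summable := summable_dualTerm ha h s t
  calc
    _ = ∑' m : ℤ, ∑' n : ℤ, (exp (-π * binaryForm a b c (m + s) (n + t)) : ℂ) := by
      rw [Complex.ofReal_tsum]
      exact (Complex.hasSum_ofReal.2 (summable_exp ha h s t).hasSum).summable.tsum_prod
    _ = 1 / (√c : ℂ) * ∑' n : ℤ, ∑' m : ℤ, partialFourier a b c s t m n := by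
      simp only [tsum_exp_snd hc]
      rw [tsum_mul_left, (summable_partialFourier hc h s t).tsum_comm
        (f := partialFourier a b c s t)]
    _ = 1 / (√c : ℂ) * (1 / (√((4 * a * c - b ^ 2) / (4 * c)) : ℂ) *
        ∑' n : ℤ, ∑' m : ℤ, dualTerm a b c s t m n) := by
      simp only [tsum_partialFourier_fst hc h]
      rw [tsum_mul_left]
    _ = (2 / √(4 * a * c - b ^ 2) : ℝ) * ∑' n : ℤ, ∑' m : ℤ, dualTerm a b c s t m n := by
      rw [← mul_assoc, div_mul_div_comm, one_mul, ← Complex.ofReal_mul, sqrt_det]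
      push_cast
      rw [one_div_div]
    _ = _ := by
      rw [dual_summable.tsum_prod, dual_summable.tsum_comm (f := dualTerm a b c s t)]

theorem tsum_exp_eq_tsum_exp_mul_cos (ha : 0 < a) (h : b ^ 2 < 4 * a * c) (s t : ℝ) :
    ∑' p : ℤ × ℤ, exp (-π * binaryForm a b c (p.1 + s) (p.2 + t)) =
      2 / √(4 * a * c - b ^ 2) * ∑' p : ℤ × ℤ,
        exp (-π * (4 / (4 * a * c - b ^ 2) * binaryForm c (-b) a p.1 p.2)) *
          cos (2 * π * (p.1 * s + p.2 * t)) := by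
  rw [← Complex.ofReal_re (∑' _, _), tsum_exp_eq_tsum_dualTerm ha h, Complex.re_ofReal_mul,
    Complex.re_tsum (summable_dualTerm ha h s t)]
  simp only [dualTerm, Complex.re_ofReal_mul, fourierChar_apply, Complex.exp_ofReal_mul_I_re]

end binaryForm

theorem theta_transformation_general {α : ℝ} (hα : 0 < α) (s t : ℝ) :
    α * ∑' p : ℤ × ℤ, exp (-(2 * π * α / √3) * binaryForm 1 1 1 (p.1 + s) (p.2 + t)) =
      ∑' p : ℤ × ℤ, exp (-(2 * π / (√3 * α)) * binaryForm 1 1 1 p.1 p.2) *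
        cos (2 * π * (p.2 * t - p.1 * s)) := by
  set a : ℝ := 2 * α / √3 with ha
  have a_pos : 0 < a := by positivity
  have det : 4 * a * a - a ^ 2 = (2 * α) ^ 2 := by
    rw [ha]
    field_simp
    rw [sq_sqrt zero_le_three]
    ring
  have poisson := binaryForm.tsum_exp_eq_tsum_exp_mul_cos a_pos
    (by nlinarith : a ^ 2 < 4 * a * a) s t
  rw [det, sqrt_sq (by positivity)] at poisson
  calc
    _ = α * ∑' p : ℤ × ℤ, exp (-π * binaryForm a a a (p.1 + s) (p.2 + t)) := by
      congr! 4 with p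
      rw [binaryForm, binaryForm, ha]
      ring
    _ = ∑' p : ℤ × ℤ, exp (-π * (4 / (2 * α) ^ 2 * binaryForm a (-a) a p.1 p.2)) *
        cos (2 * π * (p.1 * s + p.2 * t)) := by
      have scale : α * (2 / (2 * α)) = 1 := by field_simp
      rw [poisson, ← mul_assoc, scale, one_mul]
    _ = _ := by
      rw [← ((Equiv.neg ℤ).prodCongr (Equiv.refl ℤ)).tsum_eq]
      refine tsum_congr fun p ↦ ?_
      simp only [Equiv.prodCongr_apply, Prod.map, Equiv.refl_apply, Equiv.neg_apply]
      rw [binaryForm, binaryForm, ha]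
      push_cast
      congr 2
      · field_simp
        ring
      · ring

/-- The theta transformation identity (Poisson summation for the Gaussian over the
hexagonal lattice of density 1 shifted by its deep hole). -/
theorem theta_transformation (α : ℝ) (hα : 0 < α) :
    α * ∑' p : ℤ × ℤ,
        Real.exp (-(2 * Real.pi * α / Real.sqrt 3) *
          (((p.1 : ℝ) - 1 / 3) ^ 2 + ((p.1 : ℝ) - 1 / 3) * ((p.2 : ℝ) - 1 / 3) +
            ((p.2 : ℝ) - 1 / 3) ^ 2)) =
      ∑' p : ℤ × ℤ,
        Real.exp (-(2 * Real.pi / (Real.sqrt 3 * α)) *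
            ((p.1 : ℝ) ^ 2 + (p.1 : ℝ) * (p.2 : ℝ) + (p.2 : ℝ) ^ 2)) *
          Real.cos (2 * Real.pi * ((p.1 : ℝ) - (p.2 : ℝ)) / 3) := by
  convert! theta_transformation_general hα (-1 / 3) (-1 / 3) using 5 with p p
  · rw [binaryForm]
    ring
  · rw [binaryForm]
    ring
  · ring
end

section
/- For every real q with 0 < q < 1 (more generally every complex q with |q| < 1), the cubic AGM identity 3·a(q³) = a(q) + 2·b(q) holds, where a(q) = ∑_{(k,l) ∈ ℤ²} q^{k²+kl+l²} and b(q) = ∑_{(k,l) ∈ ℤ²} q^{k²+kl+l²}·e^{2πi(k−l)/3}. -/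
open scoped Real

/-- The arithmetic component `a(q) = ∑_{(k,l) ∈ ℤ²} q^{k²+kl+l²}` of the cubic AGM. -/
noncomputable def cubicA (q : ℂ) : ℂ :=
  ∑' p : ℤ × ℤ, q ^ (p.1 ^ 2 + p.1 * p.2 + p.2 ^ 2)

/-- The component `b(q) = ∑_{(k,l) ∈ ℤ²} q^{k²+kl+l²}·e^{2πi(k−l)/3}` of the cubic AGM. -/
noncomputable def cubicB (q : ℂ) : ℂ :=
  ∑' p : ℤ × ℤ,
    q ^ (p.1 ^ 2 + p.1 * p.2 + p.2 ^ 2) *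
      Complex.exp (2 * (π : ℂ) * Complex.I * (((p.1 : ℂ) - (p.2 : ℂ)) / 3))

/-!
The form `k² + kl + l²` is the norm of the Eisenstein integer `k - lζ`, where `ζ² + ζ + 1 = 0`.
Swapping `k` and `l` preserves it, so `a(q) + 2b(q)` is the sum of `q^{k²+kl+l²}` weighted by
`1 + ω^{k-l} + ω^{-(k-l)}`, with `ω = e^{2πi/3}`. The weight is `3` on the ideal `3 ∣ k - l` and
`0` off it. That ideal is generated by `1 - ζ`, of norm `3`, so multiplication by `1 - ζ`
parametrises it and turns the sum into `3a(q³)`.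
-/

/-- The norm `k² + kl + l²` of the Eisenstein integer `k - lζ`, which is encoded as `(k, l)`. -/
def eisensteinNorm (p : ℤ × ℤ) : ℤ :=
  p.1 ^ 2 + p.1 * p.2 + p.2 ^ 2

/-- Multiplication by `1 - ζ` in the coordinates `(k, l)` of the Eisenstein integer `k - lζ`. -/
def mulOneSubZeta (p : ℤ × ℤ) : ℤ × ℤ :=
  (p.1 - p.2, p.1 + 2 * p.2)

lemma eisensteinNorm_swap (p : ℤ × ℤ) : eisensteinNorm p.swap = eisensteinNorm p := by
  simp only [eisensteinNorm, Prod.fst_swap, Prod.snd_swap]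
  ring

lemma eisensteinNorm_mulOneSubZeta (p : ℤ × ℤ) :
    eisensteinNorm (mulOneSubZeta p) = 3 * eisensteinNorm p := by
  simp only [eisensteinNorm, mulOneSubZeta]
  ring

lemma mulOneSubZeta_injective : Function.Injective mulOneSubZeta := by
  rintro ⟨k, l⟩ ⟨m, n⟩ h
  simp only [mulOneSubZeta, Prod.mk.injEq] at h ⊢
  omega

lemma range_mulOneSubZeta : Set.range mulOneSubZeta = {p | 3 ∣ p.1 - p.2} := by
  ext ⟨k, l⟩
  simp only [mulOneSubZeta, Set.mem_range, Set.mem_ofPred_eq, Prod.exists, Prod.mk.injEq]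
  constructor
  · rintro ⟨m, n, rfl, rfl⟩
    exact ⟨-n, by ring⟩
  · rintro ⟨m, hm⟩
    exact ⟨k - m, -m, by ring, by linarith⟩

lemma abs_add_abs_le_two_mul_eisensteinNorm (p : ℤ × ℤ) :
    |p.1| + |p.2| ≤ 2 * eisensteinNorm p := by
  have sq_add_sq_le : p.1 ^ 2 + p.2 ^ 2 ≤ 2 * eisensteinNorm p := by
    unfold eisensteinNorm
    linarith [sq_nonneg (p.1 + p.2)]
  have abs_le_sq (n : ℤ) : |n| ≤ n ^ 2 := by
    simpa only [Int.natCast_natAbs] using Int.natAbs_le_self_sq n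
  exact (add_le_add (abs_le_sq _) (abs_le_sq _)).trans sq_add_sq_le

lemma eisensteinNorm_nonneg (p : ℤ × ℤ) : 0 ≤ eisensteinNorm p := by
  linarith [abs_add_abs_le_two_mul_eisensteinNorm p, abs_nonneg p.1, abs_nonneg p.2]

lemma summable_pow_natAbs {R : Type*} [NormedRing R] [HasSummableGeomSeries R] {x : R}
    (hx : ‖x‖ < 1) : Summable fun k : ℤ ↦ x ^ k.natAbs := by
  have h := summable_geometric_of_norm_lt_one hx
  exact .of_nat_of_neg (by simpa using h) (by simpa using h)

lemma zpow_eisensteinNorm_le {r : ℝ} (hr₀ : 0 ≤ r) (hr₁ : r ≤ 1) (p : ℤ × ℤ) :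
    r ^ eisensteinNorm p ≤ √r ^ p.1.natAbs * √r ^ p.2.natAbs := by
  obtain ⟨n, hn⟩ := Int.eq_ofNat_of_zero_le (eisensteinNorm_nonneg p)
  have natAbs_le : p.1.natAbs + p.2.natAbs ≤ 2 * n := by
    zify
    exact hn ▸ abs_add_abs_le_two_mul_eisensteinNorm p
  calc r ^ eisensteinNorm p = √r ^ (2 * n) := by
        rw [hn, zpow_natCast, pow_mul, Real.sq_sqrt hr₀]
    _ ≤ √r ^ (p.1.natAbs + p.2.natAbs) :=
        pow_le_pow_of_le_one r.sqrt_nonneg (Real.sqrt_le_one.mpr hr₁) natAbs_le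
    _ = √r ^ p.1.natAbs * √r ^ p.2.natAbs := pow_add ..

lemma summable_norm_zpow_eisensteinNorm {K : Type*} [NormedDivisionRing K] {q : K}
    (hq : ‖q‖ < 1) : Summable fun p ↦ ‖q ^ eisensteinNorm p‖ := by
  have h : Summable fun k : ℤ ↦ √‖q‖ ^ k.natAbs :=
    summable_pow_natAbs <| by
      rwa [Real.norm_of_nonneg (Real.sqrt_nonneg _), Real.sqrt_lt' one_pos, one_pow]
  refine .of_nonneg_of_le (fun _ ↦ norm_nonneg _) (fun p ↦ ?_)
    (h.mul_of_nonneg h (fun _ ↦ by positivity) (fun _ ↦ by positivity))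
  rw [norm_zpow]
  exact zpow_eisensteinNorm_le (norm_nonneg q) hq.le p

lemma zpow_pow_eq_one {G : Type*} [DivisionMonoid G] {x : G} {n : ℕ} (hx : x ^ n = 1) (m : ℤ) :
    (x ^ m) ^ n = 1 := by
  rw [← zpow_natCast, zpow_comm, zpow_natCast, hx, one_zpow]

lemma sum_range_zpow_pow_eq_ite {K : Type*} [Field K] {ζ : K} {n : ℕ}
    (hζ : IsPrimitiveRoot ζ n) (m : ℤ) :
    ∑ j ∈ Finset.range n, (ζ ^ m) ^ j = if (n : ℤ) ∣ m then (n : K) else 0 := by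
  split_ifs with h
  · simp [(hζ.zpow_eq_one_iff_dvd m).mpr h]
  · rw [geom_sum_eq (mt (hζ.zpow_eq_one_iff_dvd m).mp h), zpow_pow_eq_one hζ.pow_eq_one,
      sub_self, zero_div]

section CubeRootOfUnity

variable {K : Type*} {ω : K}

lemma one_add_zpow_add_zpow_neg_eq_ite [Field K] (hω : IsPrimitiveRoot ω 3) (m : ℤ) :
    1 + ω ^ m + ω ^ (-m) = if 3 ∣ m then 3 else 0 := by
  have zpow_neg_eq : ω ^ (-m) = (ω ^ m) ^ 2 := by
    rw [zpow_neg]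
    exact inv_eq_of_mul_eq_one_right <| by rw [← pow_succ', zpow_pow_eq_one hω.pow_eq_one]
  simpa [Finset.sum_range_succ, zpow_neg_eq] using sum_range_zpow_pow_eq_ite hω m

lemma hasSum_three_mul_comp_mulOneSubZeta [Field K] [TopologicalSpace K] [ContinuousAdd K]
    (hω : IsPrimitiveRoot ω 3) {f : ℤ × ℤ → K} (hf : ∀ p, f p.swap = f p) {a b : K}
    (ha : HasSum f a) (hb : HasSum (fun p ↦ f p * ω ^ (p.1 - p.2)) b) :
    HasSum (fun p ↦ 3 * f (mulOneSubZeta p)) (a + 2 * b) := by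
  have hb_swap : HasSum (fun p ↦ f p * ω ^ (-(p.1 - p.2))) b := by
    simpa [Function.comp_def, hf] using (Equiv.prodComm ℤ ℤ).hasSum_iff.mpr hb
  have h_ite : HasSum (fun p ↦ (if 3 ∣ p.1 - p.2 then 3 else 0) * f p) (a + 2 * b) := by
    convert (ha.add hb).add hb_swap using 1
    · ext p
      rw [← one_add_zpow_add_zpow_neg_eq_ite hω]
      ring
    · ring
  have dvd_mulOneSubZeta (p) : 3 ∣ (mulOneSubZeta p).1 - (mulOneSubZeta p).2 :=
    range_mulOneSubZeta.le ⟨p, rfl⟩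
  rw [← mulOneSubZeta_injective.hasSum_iff (by simp +contextual [range_mulOneSubZeta])] at h_ite
  simpa only [Function.comp_def, dvd_mulOneSubZeta, if_true] using h_ite

theorem cubicAGM_identity_general [NormedField K] [CompleteSpace K] (hω : IsPrimitiveRoot ω 3)
    {q : K} (hq : ‖q‖ < 1) :
    3 * ∑' p, (q ^ 3) ^ eisensteinNorm p =
      ∑' p, q ^ eisensteinNorm p + 2 * ∑' p : ℤ × ℤ, q ^ eisensteinNorm p * ω ^ (p.1 - p.2) := by
  have summable_norm := summable_norm_zpow_eisensteinNorm hq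
  have norm_ω : ‖ω‖ = 1 := (hω.isOfFinOrder three_ne_zero).norm_eq_one
  have summable_twist : Summable fun p : ℤ × ℤ ↦ q ^ eisensteinNorm p * ω ^ (p.1 - p.2) :=
    .of_norm <| by simpa [norm_ω] using summable_norm
  have zpow_mulOneSubZeta (p) :
      q ^ eisensteinNorm (mulOneSubZeta p) = (q ^ 3) ^ eisensteinNorm p := by
    rw [eisensteinNorm_mulOneSubZeta, zpow_mul, zpow_ofNat]
  have h := hasSum_three_mul_comp_mulOneSubZeta hω (fun p ↦ by rw [eisensteinNorm_swap])
    summable_norm.of_norm.hasSum summable_twist.hasSum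
  simpa only [zpow_mulOneSubZeta, tsum_mul_left] using h.tsum_eq

end CubeRootOfUnity

lemma cubicB_eq_tsum_eisensteinNorm (q : ℂ) :
    cubicB q = ∑' p : ℤ × ℤ,
      q ^ eisensteinNorm p * Complex.exp (2 * π * Complex.I / 3) ^ (p.1 - p.2) := by
  refine tsum_congr fun p ↦ ?_
  rw [eisensteinNorm, ← Complex.exp_int_mul]
  push_cast
  ring_nf

/-- The cubic AGM identity of Borwein and Borwein: `3a(q³) = a(q) + 2b(q)` for `|q| < 1`. -/
theorem cubicAGM_identity (q : ℂ) (hq : ‖q‖ < 1) :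
    3 * cubicA (q ^ 3) = cubicA q + 2 * cubicB q := by
  rw [cubicB_eq_tsum_eisensteinNorm]
  exact cubicAGM_identity_general (Complex.isPrimitiveRoot_exp 3 three_ne_zero) hq
end
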